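/- Let d ≥ 2 be an integer, let F_0, F_1, …, F_r ∈ R[t_0,…,t_r] be homogeneous polynomials of degree d all of whose coefficients lie in A, and let G_0, G_1, …, G_r ∈ R[t_0,…,t_r] be homogeneous polynomials of degree d all of whose coefficients lie in B, satisfying σ_ω(F_0) = G_0 and σ_ω(F_i) = G_i + ω·G_{i−1} for i = 1, …, r. Then the coefficient of t_r^{d−1}·t_j in F_i is zero for every 0 ≤ i ≤ r and every i ≤ j ≤ r (where for j = r this coefficient is the coefficient of t_r^d), and the coefficient of t_r^{d−1}·t_j in G_i is zero for every 0 ≤ i ≤ r and every i+1 ≤ j ≤ r. -/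

import Mathlib

open MvPolynomial Finset

/-- The `R`-algebra endomorphism `σ_ω` of `R[t_0, …, t_r]` determined by
`σ_ω(t_0) = t_0` and `σ_ω(t_i) = t_i + ω·t_{i-1}` for `1 ≤ i ≤ r`. -/
noncomputable def sigmaOmega {R : Type*} [CommRing R] {r : ℕ} (ω : R) :
    MvPolynomial (Fin (r + 1)) R →ₐ[R] MvPolynomial (Fin (r + 1)) R :=
  aeval fun i : Fin (r + 1) =>
    if i.1 = 0 then X i
    else X i + C ω * X ⟨i.1 - 1, lt_of_le_of_lt (Nat.sub_le _ _) i.isLt⟩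

/-!
Write `J F = (∂F_i/∂t_j)` and let `M` be the unipotent matrix of `σ_ω` on linear forms, so that the
compatibility condition reads `σ_ω F = M G`. By the chain rule, `σ_ω (J F) * M = M * J G`. Two
scalar consequences are played against each other.

* Since `σ_ω` fixes the coefficient of every power of `t_r`, the matrices `a` and `b` of
  coefficients of `t_r ^ (d - 1)` in `J F` and `J G` satisfy `a * M = M * b`, that is
  `a i j + a i (j + 1) * ω = b i j + ω * b (i - 1) j`. Elements of `A ∩ B` whose product with `ω`
  lies in `A + B` vanish, so going through the rows from the top, and through each row from the
  right, gives `a i j = b i j = 0` for `i < j`; the entries just below the diagonal then show that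
  all `a i i` coincide.
* Taking traces, `σ_ω (div F) = div G`. The argument for a single row, applied to `div F`, shows
  that `t_r ^ (d - 1)` does not occur in `div F`, which means `tr a = 0`. Hence `a i i = 0`.
-/

open scoped Matrix

section Jacobian

variable {ι κ τ R : Type*} [CommSemiring R]

/-- The Jacobian matrix `(∂F_i/∂t_j)` of a family of polynomials; for a vector field, its trace is
the divergence. -/
noncomputable def jacobianMatrix (F : ι → MvPolynomial κ R) : Matrix ι κ (MvPolynomial κ R) :=
  Matrix.of fun i j => pderiv j (F i)

lemma jacobianMatrix_X [DecidableEq κ] :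
    jacobianMatrix (X : κ → MvPolynomial κ R) = 1 := by
  ext1 i j
  simp [jacobianMatrix, pderiv_X, Matrix.one_apply, Pi.single_apply]

lemma pderiv_algHom_apply [Fintype κ] (φ : MvPolynomial κ R →ₐ[R] MvPolynomial τ R) (k : τ)
    (p : MvPolynomial κ R) :
    pderiv k (φ p) = ∑ j, φ (pderiv j p) * pderiv k (φ (X j)) := by
  classical
  induction p using MvPolynomial.induction_on with
  | C a => simp [← MvPolynomial.algebraMap_eq]
  | add p q hp hq => simp only [map_add, hp, hq, add_mul, sum_add_distrib]
  | mul_X p i hp =>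
    have hX : ∑ j, φ (pderiv j (X i)) * pderiv k (φ (X j)) = pderiv k (φ (X i)) := by
      simp [pderiv_X, Pi.single_apply, apply_ite φ]
    calc pderiv k (φ (p * X i))
        = φ p * pderiv k (φ (X i)) + φ (X i) * pderiv k (φ p) := by
          simp only [map_mul, Derivation.leibniz, smul_eq_mul]
      _ = ∑ j, (φ p * (φ (pderiv j (X i)) * pderiv k (φ (X j))) +
            φ (X i) * (φ (pderiv j p) * pderiv k (φ (X j)))) := by
          rw [sum_add_distrib, ← mul_sum, ← mul_sum, hX, hp]
      _ = ∑ j, φ (pderiv j (p * X i)) * pderiv k (φ (X j)) := by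
          simp only [Derivation.leibniz, smul_eq_mul, map_add, map_mul, add_mul, mul_assoc]

lemma jacobianMatrix_algHom_comp [Fintype κ] (φ : MvPolynomial κ R →ₐ[R] MvPolynomial τ R)
    (F : ι → MvPolynomial κ R) :
    jacobianMatrix (φ ∘ F) = (jacobianMatrix F).map φ * jacobianMatrix (φ ∘ X) := by
  ext1 i k
  exact pderiv_algHom_apply φ k (F i)

lemma jacobianMatrix_map_C_mulVec [Fintype κ] (M : Matrix ι κ R) (G : κ → MvPolynomial τ R) :
    jacobianMatrix (M.map C *ᵥ G) = M.map (C (σ := τ)) * jacobianMatrix G := by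
  ext1 i k
  simp only [jacobianMatrix, Matrix.of_apply, Matrix.mulVec, dotProduct, Matrix.mul_apply,
    Matrix.map_apply, map_sum, pderiv_C_mul]

lemma jacobianMatrix_linear_comp [Fintype κ] [Fintype τ]
    {φ : MvPolynomial κ R →ₐ[R] MvPolynomial τ R} {M : Matrix κ τ R}
    (hφ : φ ∘ X = M.map C *ᵥ X) (F : ι → MvPolynomial κ R) :
    jacobianMatrix (φ ∘ F) = (jacobianMatrix F).map φ * M.map (C (σ := τ)) := by
  classical
  rw [jacobianMatrix_algHom_comp, hφ, jacobianMatrix_map_C_mulVec, jacobianMatrix_X,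
    Matrix.mul_one]

lemma trace_eq_trace_of_mul_eq_mul [Fintype ι] [DecidableEq ι] {M P Q : Matrix ι ι R}
    (hM : IsUnit M) (h : P * M = M * Q) : P.trace = Q.trace := by
  obtain ⟨u, rfl⟩ := hM
  rw [← Matrix.trace_units_conj u Q, ← h, Units.mul_inv_cancel_right]

lemma map_trace_jacobianMatrix_of_equivariant [Fintype κ] [DecidableEq κ]
    {φ : MvPolynomial κ R →ₐ[R] MvPolynomial κ R} {M : Matrix κ κ R} (hM : IsUnit M)
    (hφ : φ ∘ X = M.map C *ᵥ X) {F G : κ → MvPolynomial κ R} (hFG : φ ∘ F = M.map C *ᵥ G) :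
    φ (jacobianMatrix F).trace = (jacobianMatrix G).trace := by
  rw [AddMonoidHom.map_trace φ]
  refine trace_eq_trace_of_mul_eq_mul (hM.map C.mapMatrix) ?_
  rw [RingHom.mapMatrix_apply, ← jacobianMatrix_map_C_mulVec, ← hFG,
    jacobianMatrix_linear_comp hφ]

end Jacobian

section ShiftMatrix

variable {R : Type*}

/-- The matrix of `σ_ω` on the linear forms `t_0, …, t_r`: ones on the diagonal, `ω` just below
it. -/
def shiftMatrix [Semiring R] (r : ℕ) (ω : R) : Matrix (Fin (r + 1)) (Fin (r + 1)) R :=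
  Matrix.of fun i j => (if j = i then 1 else 0) + if i.1 = j.1 + 1 then ω else 0

variable {r : ℕ}

section Semiring

variable [Semiring R] (ω : R) (v : Fin (r + 1) → R)

lemma shiftMatrix_mulVec_zero : (shiftMatrix r ω *ᵥ v) 0 = v 0 := by
  simp [shiftMatrix, Matrix.mulVec, dotProduct]

lemma shiftMatrix_mulVec_succ (k : Fin r) :
    (shiftMatrix r ω *ᵥ v) k.succ = v k.succ + ω * v k.castSucc := by
  have hk (j : Fin (r + 1)) : k.succ.1 = j.1 + 1 ↔ j = k.castSucc := by grind
  simp [shiftMatrix, Matrix.mulVec, dotProduct, add_mul, sum_add_distrib, hk, -Fin.val_succ]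

lemma vecMul_shiftMatrix_last : (v ᵥ* shiftMatrix r ω) (Fin.last r) = v (Fin.last r) := by
  have hr (i : Fin (r + 1)) : i.1 ≠ r + 1 := i.2.ne
  simp [shiftMatrix, Matrix.vecMul, dotProduct, hr]

lemma vecMul_shiftMatrix_castSucc (k : Fin r) :
    (v ᵥ* shiftMatrix r ω) k.castSucc = v k.castSucc + v k.succ * ω := by
  have hk (i : Fin (r + 1)) : i.1 = k.castSucc.1 + 1 ↔ i = k.succ := by grind
  simp [shiftMatrix, Matrix.vecMul, dotProduct, mul_add, sum_add_distrib, hk, -Fin.val_castSucc]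

end Semiring

lemma map_shiftMatrix {S : Type*} [Semiring R] [Semiring S] (f : R →+* S) (ω : R) :
    (shiftMatrix r ω).map f = shiftMatrix r (f ω) := by
  ext i j
  simp [shiftMatrix, apply_ite f]

lemma isUnit_shiftMatrix [CommRing R] (ω : R) : IsUnit (shiftMatrix r ω) := by
  have h_lower : (shiftMatrix r ω).IsLowerTriangular := by
    intro i j hij
    have hij : i < j := hij
    simp [shiftMatrix, hij.ne', show i.1 ≠ j.1 + 1 by lia]
  rw [Matrix.isUnit_iff_isUnit_det, Matrix.det_of_isLowerTriangular _ h_lower]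
  simp [shiftMatrix]

end ShiftMatrix

section CupInjective

variable {R : Type*} [CommRing R]

/-- The map `A ∩ B → R ⧸ (A + B)` induced by multiplication by `ω` is injective. When `A` and `B`
are the sections of the structure sheaf over a two-element open cover and `R` those over the
overlap, this map is the cup product `H⁰ → H¹` with the Čech class of `ω`. -/
def CupInjective (A B : AddSubgroup R) (ω : R) : Prop :=
  ∀ x ∈ A ⊓ B, x * ω ∈ A ⊔ B → x = 0

lemma cupInjective_of_inf_eq_bot {K : Type*} [CommRing K] [Algebra K R] {A B : Subalgebra K R}
    {ω : R} (hAB : A ⊓ B = ⊥) (hω : ∀ f ∈ A, ∀ c : K, f + c • ω ∈ B → c = 0) :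
    CupInjective A.toSubring.toAddSubgroup B.toSubring.toAddSubgroup ω := by
  intro x hx hxω
  have hx_bot : x ∈ (⊥ : Subalgebra K R) := hAB ▸ hx
  obtain ⟨c, rfl⟩ := Algebra.mem_bot.mp hx_bot
  obtain ⟨f, hf, g, hg, hfg⟩ := AddSubgroup.mem_sup.mp hxω
  have hcω : -f + c • ω = g := by rw [Algebra.smul_def, ← hfg, neg_add_cancel_left]
  rw [hω (-f) (A.neg_mem hf) c (hcω ▸ hg), map_zero]

namespace CupInjective

variable {A B : AddSubgroup R} {ω : R} (hω : CupInjective A B ω)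

include hω

lemma eq_zero {x f g : R} (hxA : x ∈ A) (hxB : x ∈ B) (hf : f ∈ A) (hg : g ∈ B)
    (h : f + x * ω = g) : x = 0 := by
  refine hω x ⟨hxA, hxB⟩ ?_
  rw [← neg_add_eq_iff_eq_add.mpr h.symm]
  exact add_mem (AddSubgroup.mem_sup_left (neg_mem hf)) (AddSubgroup.mem_sup_right hg)

variable {r : ℕ}

section Row

variable {x y : Fin (r + 1) → R} (hx : ∀ j, x j ∈ A) (hy : ∀ j, y j ∈ B) {i : Fin (r + 1)}
  (hxy : ∀ j, i ≤ j → (x ᵥ* shiftMatrix r ω) j = y j)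

include hx hy hxy

lemma succ_eq_zero_of_vecMul_eq {k : Fin r} (hik : i ≤ k.castSucc) (hk : x k.succ = y k.succ) :
    x k.succ = 0 :=
  hω.eq_zero (hx _) (hk ▸ hy _) (hx _) (hy _)
    ((vecMul_shiftMatrix_castSucc ω x k).symm.trans (hxy _ hik))

lemma eq_of_vecMul_eq (j : Fin (r + 1)) (hij : i ≤ j) : x j = y j := by
  induction j using Fin.reverseInduction with
  | last => rw [← hxy _ hij, vecMul_shiftMatrix_last]
  | cast k ih =>
    have hk : x k.succ = 0 :=
      hω.succ_eq_zero_of_vecMul_eq hx hy hxy hij (ih (hij.trans k.castSucc_le_succ))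
    rw [← hxy _ hij, vecMul_shiftMatrix_castSucc, hk, zero_mul, add_zero]

lemma eq_zero_of_vecMul_eq {j : Fin (r + 1)} (hij : i < j) : x j = 0 := by
  obtain ⟨k, rfl⟩ := Fin.exists_succ_eq.mpr (Fin.ne_zero_of_lt hij)
  exact hω.succ_eq_zero_of_vecMul_eq hx hy hxy (Fin.le_castSucc_iff.mpr hij)
    (hω.eq_of_vecMul_eq hx hy hxy _ hij.le)

end Row

section Intertwining

variable {a b : Matrix (Fin (r + 1)) (Fin (r + 1)) R} (ha : ∀ i j, a i j ∈ A)
  (hb : ∀ i j, b i j ∈ B) (hab : a * shiftMatrix r ω = shiftMatrix r ω * b)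

include ha hb hab

lemma vecMul_shiftMatrix_apply_eq_of_le (i j : Fin (r + 1)) (hij : i ≤ j) :
    (a i ᵥ* shiftMatrix r ω) j = b i j := by
  induction i using Fin.induction generalizing j with
  | zero => exact (congrFun₂ hab 0 j).trans (shiftMatrix_mulVec_zero ω (b.col j))
  | succ k ih =>
    have hkj : k.castSucc < j := Fin.castSucc_lt_iff_succ_le.mpr hij
    have hbk : b k.castSucc j = 0 := by
      rw [← hω.eq_of_vecMul_eq (ha _) (hb _) ih j hkj.le,
        hω.eq_zero_of_vecMul_eq (ha _) (hb _) ih hkj]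
    calc (a k.succ ᵥ* shiftMatrix r ω) j
        = b k.succ j + ω * b k.castSucc j :=
          (congrFun₂ hab k.succ j).trans (shiftMatrix_mulVec_succ ω (b.col j) k)
      _ = b k.succ j := by rw [hbk, mul_zero, add_zero]

lemma apply_eq_apply_of_le {i j : Fin (r + 1)} (hij : i ≤ j) : a i j = b i j :=
  hω.eq_of_vecMul_eq (ha i) (hb i) (hω.vecMul_shiftMatrix_apply_eq_of_le ha hb hab i) j hij

lemma left_apply_eq_zero_of_lt {i j : Fin (r + 1)} (hij : i < j) : a i j = 0 :=
  hω.eq_zero_of_vecMul_eq (ha i) (hb i) (hω.vecMul_shiftMatrix_apply_eq_of_le ha hb hab i) hij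

lemma right_apply_eq_zero_of_lt {i j : Fin (r + 1)} (hij : i < j) : b i j = 0 := by
  rw [← hω.apply_eq_apply_of_le ha hb hab hij.le, hω.left_apply_eq_zero_of_lt ha hb hab hij]

lemma diag_apply_eq_diag_zero (i : Fin (r + 1)) : a i i = a 0 0 := by
  induction i using Fin.induction with
  | zero => rfl
  | succ k ih =>
    have h_diag (i) : a i i = b i i := hω.apply_eq_apply_of_le ha hb hab le_rfl
    have h_subdiag : a k.succ k.castSucc + a k.succ k.succ * ω =
        b k.succ k.castSucc + ω * b k.castSucc k.castSucc := by
      rw [← vecMul_shiftMatrix_castSucc]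
      exact (congrFun₂ hab _ _).trans (shiftMatrix_mulVec_succ ω (b.col _) k)
    rw [← ih, ← sub_eq_zero]
    refine hω.eq_zero (sub_mem (ha _ _) (ha _ _)) ?_ (ha k.succ k.castSucc)
      (hb k.succ k.castSucc) ?_
    · rw [h_diag, h_diag]
      exact sub_mem (hb _ _) (hb _ _)
    · rw [h_diag k.castSucc]
      linear_combination h_subdiag

lemma diag_apply_eq_zero [IsAddTorsionFree R] (htr : a.trace = 0) (i : Fin (r + 1)) :
    a i i = 0 := by
  have h_nsmul : (r + 1) • a 0 0 = 0 := by
    rw [← htr, Matrix.trace]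
    simp [hω.diag_apply_eq_diag_zero ha hb hab]
  rw [hω.diag_apply_eq_diag_zero ha hb hab, (nsmul_eq_zero_iff_right r.succ_ne_zero).mp h_nsmul]

end Intertwining

end CupInjective

end CupInjective

lemma coeff_single_mul_X_of_ne {σ R : Type*} [CommSemiring R] {s i : σ} (hi : i ≠ s) (n : ℕ)
    (p : MvPolynomial σ R) :
    coeff (Finsupp.single s n) (p * X i) = 0 := by
  classical
  rw [coeff_mul_X', if_neg]
  simp [hi]

section SigmaOmega

variable {R : Type*} [CommRing R] {r : ℕ} (ω : R)

lemma sigmaOmega_X_zero : sigmaOmega ω (X (0 : Fin (r + 1))) = X 0 := by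
  simp [sigmaOmega]

lemma sigmaOmega_X_succ (k : Fin r) :
    sigmaOmega ω (X k.succ) = X k.succ + C ω * X k.castSucc := by
  simp [sigmaOmega, Fin.castSucc, Fin.castAdd, Fin.castLE]

lemma sigmaOmega_comp_X :
    sigmaOmega ω ∘ (X : Fin (r + 1) → _) = (shiftMatrix r ω).map C *ᵥ X := by
  rw [map_shiftMatrix]
  ext1 i
  cases i using Fin.cases with
  | zero => rw [shiftMatrix_mulVec_zero, Function.comp_apply, sigmaOmega_X_zero]
  | succ k => rw [shiftMatrix_mulVec_succ, Function.comp_apply, sigmaOmega_X_succ]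

lemma coeff_single_last_sigmaOmega (n : ℕ) (p : MvPolynomial (Fin (r + 1)) R) :
    coeff (Finsupp.single (Fin.last r) n) (sigmaOmega ω p) =
      coeff (Finsupp.single (Fin.last r) n) p := by
  induction p using MvPolynomial.induction_on generalizing n with
  | C a => rw [← algebraMap_eq, AlgHom.commutes]
  | add p q hp hq => rw [map_add, coeff_add, coeff_add, hp, hq]
  | mul_X p i hp =>
    have h_mul_X : coeff (Finsupp.single (Fin.last r) n) (sigmaOmega ω p * X i) =
        coeff (Finsupp.single (Fin.last r) n) (p * X i) := by
      by_cases hi : i = Fin.last r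
      · rw [hi, coeff_mul_X', coeff_mul_X', ← Finsupp.single_tsub, hp]
      · rw [coeff_single_mul_X_of_ne hi, coeff_single_mul_X_of_ne hi]
    rw [map_mul, ← h_mul_X]
    cases i using Fin.cases with
    | zero => rw [sigmaOmega_X_zero]
    | succ k =>
      rw [sigmaOmega_X_succ, mul_add, coeff_add, mul_left_comm, coeff_C_mul,
        coeff_single_mul_X_of_ne k.castSucc_ne_last, mul_zero, add_zero]

end SigmaOmega

lemma coeff_pderiv_eq_nsmul {σ R : Type*} [CommSemiring R] (i : σ) (p : MvPolynomial σ R)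
    (m : σ →₀ ℕ) :
    coeff m (pderiv i p) = (m i + 1) • coeff (m + Finsupp.single i 1) p := by
  rw [coeff_pderiv, nsmul_eq_mul, Nat.cast_add_one, mul_comm]

lemma coeff_pderiv_mem {σ R : Type*} [CommRing R] {A : AddSubgroup R} {p : MvPolynomial σ R}
    (hp : ∀ m, coeff m p ∈ A) (i : σ) (m : σ →₀ ℕ) : coeff m (pderiv i p) ∈ A := by
  rw [coeff_pderiv_eq_nsmul]
  exact nsmul_mem (hp _) _

lemma coeff_trace_jacobianMatrix_mem {κ R : Type*} [Fintype κ] [CommRing R] {A : AddSubgroup R}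
    {F : κ → MvPolynomial κ R} (hF : ∀ i m, coeff m (F i) ∈ A) (m : κ →₀ ℕ) :
    coeff m (jacobianMatrix F).trace ∈ A := by
  rw [Matrix.trace, coeff_sum]
  exact sum_mem fun i _ => coeff_pderiv_mem (hF i) i m

section AxisJacobian

variable {ι R : Type*} [CommRing R] {r : ℕ} {n : ℕ}

/-- The matrix of the coefficients of `t_r ^ n` in the partial derivatives `∂F_i/∂t_j`. Its `(i, j)`
entry is a positive multiple of the coefficient of `t_r ^ n * t_j` in `F_i`. -/
noncomputable def axisJacobian (n : ℕ) (F : ι → MvPolynomial (Fin (r + 1)) R) :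
    Matrix ι (Fin (r + 1)) R :=
  (jacobianMatrix F).map (coeff (Finsupp.single (Fin.last r) n))

lemma axisJacobian_apply (F : ι → MvPolynomial (Fin (r + 1)) R) (i : ι) (j : Fin (r + 1)) :
    axisJacobian n F i j = (Finsupp.single (Fin.last r) n j + 1) •
      coeff (Finsupp.single (Fin.last r) n + Finsupp.single j 1) (F i) :=
  coeff_pderiv_eq_nsmul j (F i) _

lemma axisJacobian_apply_eq_zero_iff [IsAddTorsionFree R] {F : ι → MvPolynomial (Fin (r + 1)) R}
    {i : ι} {j : Fin (r + 1)} :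
    axisJacobian n F i j = 0 ↔
      coeff (Finsupp.single (Fin.last r) n + Finsupp.single j 1) (F i) = 0 := by
  rw [axisJacobian_apply, nsmul_eq_zero_iff_right (Nat.succ_ne_zero _)]

lemma axisJacobian_mem {A : AddSubgroup R} {F : ι → MvPolynomial (Fin (r + 1)) R}
    (hF : ∀ i m, coeff m (F i) ∈ A) (i : ι) (j : Fin (r + 1)) : axisJacobian n F i j ∈ A :=
  coeff_pderiv_mem (hF i) j _

lemma trace_axisJacobian (F : Fin (r + 1) → MvPolynomial (Fin (r + 1)) R) :
    (axisJacobian n F).trace =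
      coeff (Finsupp.single (Fin.last r) n) (jacobianMatrix F).trace := by
  rw [Matrix.trace, Matrix.trace, coeff_sum]
  rfl

lemma axisJacobian_sigmaOmega_comp (ω : R) (F : ι → MvPolynomial (Fin (r + 1)) R) :
    axisJacobian n (sigmaOmega ω ∘ F) = axisJacobian n F * shiftMatrix r ω := by
  rw [axisJacobian, jacobianMatrix_linear_comp (sigmaOmega_comp_X ω)]
  ext i j
  simp only [axisJacobian, Matrix.map_apply, Matrix.mul_apply, coeff_sum]
  refine sum_congr rfl fun k _ => ?_
  rw [mul_comm, coeff_C_mul, coeff_single_last_sigmaOmega, mul_comm]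

lemma axisJacobian_map_C_mulVec {κ : Type*} [Fintype κ] (M : Matrix ι κ R)
    (G : κ → MvPolynomial (Fin (r + 1)) R) :
    axisJacobian n (M.map C *ᵥ G) = M * axisJacobian n G := by
  rw [axisJacobian, jacobianMatrix_map_C_mulVec]
  ext i j
  simp only [axisJacobian, Matrix.map_apply, Matrix.mul_apply, coeff_sum, coeff_C_mul]

end AxisJacobian

section Vanishing

variable {R : Type*} [CommRing R] [IsAddTorsionFree R] {r n : ℕ} {A B : AddSubgroup R} {ω : R}

lemma coeff_eq_zero_of_sigmaOmega_eq (hω : CupInjective A B ω)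
    {P Q : MvPolynomial (Fin (r + 1)) R} (hP : ∀ m, coeff m P ∈ A) (hQ : ∀ m, coeff m Q ∈ B)
    (hPQ : sigmaOmega ω P = Q) {j : Fin (r + 1)} (hj : 0 < j) :
    coeff (Finsupp.single (Fin.last r) n + Finsupp.single j 1) P = 0 := by
  have h_row : axisJacobian n (fun _ : Unit => P) * shiftMatrix r ω =
      axisJacobian n (fun _ : Unit => Q) := by
    rw [← axisJacobian_sigmaOmega_comp, ← hPQ]
    rfl
  exact axisJacobian_apply_eq_zero_iff.mp <|
    hω.eq_zero_of_vecMul_eq (axisJacobian_mem (fun _ => hP) ()) (axisJacobian_mem (fun _ => hQ) ())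
      (fun j _ => congrFun₂ h_row () j) hj

lemma trace_axisJacobian_eq_zero (hr : r ≠ 0) (hn : n ≠ 0) (hω : CupInjective A B ω)
    {F G : Fin (r + 1) → MvPolynomial (Fin (r + 1)) R} (hF : ∀ i m, coeff m (F i) ∈ A)
    (hG : ∀ i m, coeff m (G i) ∈ B) (hFG : sigmaOmega ω ∘ F = (shiftMatrix r ω).map C *ᵥ G) :
    (axisJacobian n F).trace = 0 := by
  have hdiv : sigmaOmega ω (jacobianMatrix F).trace = (jacobianMatrix G).trace :=
    map_trace_jacobianMatrix_of_equivariant (isUnit_shiftMatrix ω) (sigmaOmega_comp_X ω) hFG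
  obtain ⟨m, rfl⟩ := Nat.exists_eq_succ_of_ne_zero hn
  rw [trace_axisJacobian, Nat.succ_eq_add_one, Finsupp.single_add]
  exact coeff_eq_zero_of_sigmaOmega_eq hω (coeff_trace_jacobianMatrix_mem hF)
    (coeff_trace_jacobianMatrix_mem hG) hdiv (Fin.pos_iff_ne_zero.mpr (by simpa [Fin.ext_iff]))

theorem stmt7_general (hr : r ≠ 0) (hn : n ≠ 0) (hω : CupInjective A B ω)
    {F G : Fin (r + 1) → MvPolynomial (Fin (r + 1)) R}
    (hF : ∀ i m, coeff m (F i) ∈ A) (hG : ∀ i m, coeff m (G i) ∈ B)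
    (hFG_zero : sigmaOmega ω (F 0) = G 0)
    (hFG_succ : ∀ k : Fin r, sigmaOmega ω (F k.succ) = G k.succ + C ω * G k.castSucc) :
    (∀ i j, i ≤ j → coeff (Finsupp.single (Fin.last r) n + Finsupp.single j 1) (F i) = 0) ∧
    (∀ i j, i < j → coeff (Finsupp.single (Fin.last r) n + Finsupp.single j 1) (G i) = 0) := by
  have hFG : sigmaOmega ω ∘ F = (shiftMatrix r ω).map C *ᵥ G := by
    rw [map_shiftMatrix]
    ext1 i
    cases i using Fin.cases with
    | zero => rw [shiftMatrix_mulVec_zero, Function.comp_apply, hFG_zero]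
    | succ k => rw [shiftMatrix_mulVec_succ, Function.comp_apply, hFG_succ]
  have h_intertwine : axisJacobian n F * shiftMatrix r ω = shiftMatrix r ω * axisJacobian n G := by
    rw [← axisJacobian_sigmaOmega_comp, hFG, axisJacobian_map_C_mulVec]
  have htr : (axisJacobian n F).trace = 0 := trace_axisJacobian_eq_zero hr hn hω hF hG hFG
  refine ⟨fun i j hij => axisJacobian_apply_eq_zero_iff.mp ?_,
    fun i j hij => axisJacobian_apply_eq_zero_iff.mp ?_⟩
  · obtain rfl | hlt := hij.eq_or_lt
    · exact hω.diag_apply_eq_zero (axisJacobian_mem hF) (axisJacobian_mem hG) h_intertwine htr i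
    · exact hω.left_apply_eq_zero_of_lt (axisJacobian_mem hF) (axisJacobian_mem hG) h_intertwine hlt
  · exact hω.right_apply_eq_zero_of_lt (axisJacobian_mem hF) (axisJacobian_mem hG) h_intertwine hij

end Vanishing

theorem stmt7 {K R : Type*} [Field K] [CharZero K] [CommRing R] [Algebra K R]
    (r : ℕ) (hr : 1 ≤ r) (ω : R)
    (A B : Subalgebra K R) (hAB : A ⊓ B = ⊥)
    (hω : ∀ f ∈ A, ∀ c : K, f + c • ω ∈ B → c = 0)
    (d : ℕ) (hd : 2 ≤ d)
    (F G : Fin (r + 1) → MvPolynomial (Fin (r + 1)) R)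
    (hFhom : ∀ i, (F i).IsHomogeneous d) (hGhom : ∀ i, (G i).IsHomogeneous d)
    (hFA : ∀ i, ∀ m : Fin (r + 1) →₀ ℕ, MvPolynomial.coeff m (F i) ∈ A)
    (hGB : ∀ i, ∀ m : Fin (r + 1) →₀ ℕ, MvPolynomial.coeff m (G i) ∈ B)
    (hcomp0 : sigmaOmega ω (F 0) = G 0)
    (hcomp : ∀ i : Fin (r + 1), 1 ≤ i.1 →
      sigmaOmega ω (F i) = G i + MvPolynomial.C ω *
        G ⟨i.1 - 1, lt_of_le_of_lt (Nat.sub_le _ _) i.isLt⟩) :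
    (∀ i j : Fin (r + 1), i ≤ j →
      MvPolynomial.coeff
        (Finsupp.single (Fin.last r) (d - 1) + Finsupp.single j 1) (F i) = 0) ∧
    (∀ i j : Fin (r + 1), i.1 + 1 ≤ j.1 →
      MvPolynomial.coeff
        (Finsupp.single (Fin.last r) (d - 1) + Finsupp.single j 1) (G i) = 0) := by
  have : IsAddTorsionFree R := .of_isTorsionFree K R
  exact stmt7_general (by lia) (by lia) (cupInjective_of_inf_eq_bot hAB hω) hFA hGB hcomp0
    fun k => hcomp k.succ (by simp)
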